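/- Let n be a finite-dimensional nilpotent Lie algebra over a field F of characteristic zero with nilindex p ≥ 4. Suppose there exists a derivation D of n such that D(n^2) ⊆ Z(n) and D does not vanish identically on n^2. Then n admits a local automorphism which is not an automorphism. -/

import Mathlib

theorem aux_mem_lcs {F L : Type*} [Field F] [LieRing L] [LieAlgebra F L] (w : L) :
    w ∈ LieModule.lowerCentralSeries F L L 1 ↔
      w ∈ Submodule.span F {m : L | ∃ x y : L, ⁅x, y⁆ = m} := by
  rw [LieModule.lowerCentralSeries_succ, LieModule.lowerCentralSeries_zero,
    ← LieSubmodule.mem_toSubmodule, LieSubmodule.lieIdeal_oper_eq_linear_span']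
  simp

theorem aux_lie_mem {F L : Type*} [Field F] [LieRing L] [LieAlgebra F L] (x y : L) :
    ⁅x, y⁆ ∈ LieModule.lowerCentralSeries F L L 1 := by
  rw [aux_mem_lcs]; exact Submodule.subset_span ⟨x, y, rfl⟩

theorem aux_lcs_induct {F L : Type*} [Field F] [LieRing L] [LieAlgebra F L]
    (Q : Submodule F L) (h : ∀ x y : L, ⁅x, y⁆ ∈ Q) (w : L)
    (hw : w ∈ LieModule.lowerCentralSeries F L L 1) : w ∈ Q := by
  rw [aux_mem_lcs] at hw
  refine (Submodule.span_le.2 ?_) hw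
  rintro _ ⟨x, y, rfl⟩
  exact h x y

theorem aux_reduction {F L : Type*} [Field F] [LieRing L] [LieAlgebra F L]
    (φ : L ≃ₗ⁅F⁆ L)
    (h1 : ∀ w ∈ LieModule.lowerCentralSeries F L L 1, φ w - w ∈ LieAlgebra.center F L)
    (h2 : ∃ w ∈ LieModule.lowerCentralSeries F L L 1, φ w ≠ w) :
    ∃ T : L →ₗ[F] L,
      (∀ x : L, ∃ φ : L ≃ₗ⁅F⁆ L, T x = φ x) ∧
      ¬ (Function.Bijective T ∧ ∀ x y : L, T ⁅x, y⁆ = ⁅T x, T y⁆) := by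
  set W : Submodule F L := (LieModule.lowerCentralSeries F L L 1).toSubmodule with hW
  have hWm : ∀ x, x ∈ W ↔ x ∈ LieModule.lowerCentralSeries F L L 1 := fun x => Iff.rfl
  have cen : ∀ z ∈ LieAlgebra.center F L, ∀ x : L, ⁅x, z⁆ = 0 := fun z hz =>
    (LieModule.mem_maxTrivSubmodule F L L z).1 hz
  have cen' : ∀ z ∈ LieAlgebra.center F L, ∀ x : L, ⁅z, x⁆ = 0 := fun z hz x => by
    rw [← lie_skew, cen z hz, neg_zero]
  have hφW : ∀ w ∈ W, φ w ∈ W := fun w hw =>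
    aux_lcs_induct (W.comap (φ : L →ₗ[F] L)) (fun x y => by
      simp only [Submodule.mem_comap]
      change φ ⁅x, y⁆ ∈ W
      rw [LieEquiv.map_lie]; exact aux_lie_mem _ _) w hw
  obtain ⟨π, hπ⟩ := W.subtype.exists_leftInverse_of_injective W.ker_subtype
  have hπ' : ∀ w (hw : w ∈ W), (π w : L) = w := fun w hw => by
    have := LinearMap.congr_fun hπ ⟨w, hw⟩
    simpa using congrArg Subtype.val this
  let ψ : L →ₗ[F] L := ((φ : L →ₗ[F] L) - LinearMap.id) ∘ₗ W.subtype ∘ₗ π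
  have hψ : ∀ x, ψ x = φ (π x) - π x := fun x => rfl
  have hψZ : ∀ x, ψ x ∈ LieAlgebra.center F L := fun x => by
    rw [hψ]; exact h1 _ (π x).2
  have hψW : ∀ x, ψ x ∈ W := fun x => by
    rw [hψ]; exact W.sub_mem (hφW _ (π x).2) (π x).2
  refine ⟨LinearMap.id + ψ, ?_, ?_⟩
  · intro x
    by_cases hx : x ∈ W
    · refine ⟨φ, ?_⟩
      simp [hψ, hπ' x hx]
    · obtain ⟨f, hfx, hf⟩ := Submodule.exists_le_ker_of_notMem hx
      set c := f x with hc
      have hfW : ∀ w ∈ W, f w = 0 := fun w hw => hf hw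
      set z := ψ x with hz
      have hzZ := hψZ x
      have hfz : f z = 0 := hfW _ (hψW x)
      have hfl : ∀ a b : L, f ⁅a, b⁆ = 0 := fun a b => hfW _ (aux_lie_mem a b)
      refine ⟨{ toFun := fun a => a + (c⁻¹ * f a) • z
                invFun := fun a => a - (c⁻¹ * f a) • z
                map_add' := fun a b => by simp only [map_add, mul_add, add_smul]; abel
                map_smul' := fun r a => by
                  simp only [map_smul, smul_add, smul_smul, RingHom.id_apply, smul_eq_mul]
                  congr 2; ring
                map_lie' := fun {a b} => by
                  simp [hfl, cen z hzZ, cen' z hzZ]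
                left_inv := fun a => by simp [hfz]
                right_inv := fun a => by simp [hfz] }, ?_⟩
      change x + ψ x = x + (c⁻¹ * f x) • z
      rw [← hc, inv_mul_cancel₀ hfx, one_smul]
  · rintro ⟨-, hT⟩
    obtain ⟨w, hw, hne⟩ := h2
    apply hne
    have : w ∈ LinearMap.ker ((φ : L →ₗ[F] L) - LinearMap.id) := by
      refine aux_lcs_induct _ (fun x y => ?_) w hw
      have := hT x y
      have hxy : ((π ⁅x, y⁆ : W) : L) = ⁅x, y⁆ := hπ' _ (aux_lie_mem x y)
      simp only [LinearMap.add_apply, LinearMap.id_apply, hψ ⁅x, y⁆, hxy, add_lie, lie_add,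
        cen _ (hψZ y), cen' _ (hψZ x)] at this
      change φ ⁅x, y⁆ - ⁅x, y⁆ = 0
      rw [sub_eq_zero]
      simpa using this
    exact sub_eq_zero.1 this

theorem aux_ker {F V : Type*} [Field F] [AddCommGroup V] [Module F V]
    (n s : Module.End F V) (sN : IsNilpotent n) (sS : s.IsSemisimple) (cc : Commute n s)
    (m : V) (hm : (n + s) m = 0) : s m = 0 := by
  have inv : ∀ v ∈ LinearMap.ker (n + s), s v ∈ LinearMap.ker (n + s) := fun v hv => by
    rw [LinearMap.mem_ker] at hv ⊢
    have : Commute (n + s) s := cc.add_left (Commute.refl s)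
    calc (n + s) (s v) = s ((n + s) v) := LinearMap.congr_fun this v
      _ = 0 := by rw [hv, map_zero]
  let t : Module.End F (LinearMap.ker (n + s)) := s.restrict inv
  have r1 : t.IsSemisimple := Module.End.IsSemisimple.restrict inv sS
  have r2 : IsNilpotent t := by
    obtain ⟨k, hk⟩ := sN
    refine ⟨k, ?_⟩
    ext v
    have hp : ∀ j : ℕ, ((t ^ j) v : V) = ((-1) ^ j : F) • (n ^ j) v := by
      intro j
      induction j with
      | zero => simp
      | succ j ih =>
        have hsv : s v = - n v := by
          have := v.2
          rw [LinearMap.mem_ker, LinearMap.add_apply] at this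
          exact eq_neg_of_add_eq_zero_right this
        rw [pow_succ' t, Module.End.mul_apply]
        change s ((t ^ j) v : V) = _
        rw [ih, map_smul]
        have : s ((n ^ j) v) = (n ^ j) (s v) := LinearMap.congr_fun (cc.symm.pow_right j) v
        rw [this, hsv, map_neg, pow_succ n, pow_succ]
        simp [neg_smul]
    have := hp k
    rw [hk] at this
    simp [this]
  have := Module.End.eq_zero_of_isNilpotent_isSemisimple r2 r1
  have := LinearMap.congr_fun this ⟨m, hm⟩
  exact congrArg Subtype.val this

/-- The semisimple part of a derivation is a derivation. -/
theorem aux_jordan {F L : Type*} [Field F] [CharZero F] [LieRing L] [LieAlgebra F L]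
    [Module.Finite F L] (D N S : Module.End F L) (hD : ∀ x y, D ⁅x, y⁆ = ⁅D x, y⁆ + ⁅x, D y⁆)
    (hN : IsNilpotent N) (hS : S.IsSemisimple) (hc : Commute N S) (hDNS : D = N + S) (x y : L) :
    S ⁅x, y⁆ = ⁅S x, y⁆ + ⁅x, S y⁆ := by
  let A : Module.End F L →ₗ[F] Module.End F (L →ₗ[F] L →ₗ[F] L) :=
    { toFun := fun T => { toFun := fun m => m ∘ₗ T, map_add' := fun _ _ => rfl,
                          map_smul' := fun _ _ => rfl }
      map_add' := fun T U => by ext m a b; simp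
      map_smul' := fun r T => by ext m a b; simp }
  let B : Module.End F L →ₗ[F] Module.End F (L →ₗ[F] L →ₗ[F] L) :=
    { toFun := fun T => { toFun := fun m => m.compl₂ T, map_add' := fun _ _ => rfl,
                          map_smul' := fun _ _ => rfl }
      map_add' := fun T U => by ext m a b; exact (m a).map_add _ _
      map_smul' := fun r T => by ext m a b; exact (m a).map_smul _ _ }
  let C : Module.End F L →ₗ[F] Module.End F (L →ₗ[F] L →ₗ[F] L) :=
    { toFun := fun T => { toFun := fun m => m.compr₂ T, map_add' := fun _ _ => by ext; simp,
                          map_smul' := fun _ _ => by ext; simp }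
      map_add' := fun T U => by ext m a b; simp
      map_smul' := fun r T => by ext m a b; simp }
  have hA : ∀ T m a b, A T m a b = m (T a) b := fun T m a b => rfl
  have hB : ∀ T m a b, B T m a b = m a (T b) := fun T m a b => rfl
  have hC : ∀ T m a b, C T m a b = T (m a b) := fun T m a b => rfl
  have pA : ∀ T (n : ℕ), A (T ^ n) = A T ^ n := by
    intro T n
    induction n with
    | zero => ext m a b; simp [hA]
    | succ n ih => rw [pow_succ (A T), ← ih, pow_succ' T]; ext m a b; simp [hA]
  have pB : ∀ T (n : ℕ), B (T ^ n) = B T ^ n := by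
    intro T n
    induction n with
    | zero => ext m a b; simp [hB]
    | succ n ih => rw [pow_succ (B T), ← ih, pow_succ' T]; ext m a b; simp [hB]
  have pC : ∀ T (n : ℕ), C (T ^ n) = C T ^ n := by
    intro T n
    induction n with
    | zero => ext m a b; simp [hC]
    | succ n ih => rw [pow_succ (C T), ← ih, pow_succ T]; ext m a b; simp [hC]
  have key : ∀ (G : Module.End F L →ₗ[F] Module.End F (L →ₗ[F] L →ₗ[F] L)),
      (∀ T (n : ℕ), G (T ^ n) = G T ^ n) → (G S).IsSemisimple ∧ ∃ k : ℕ, (G N) ^ k = 0 := by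
    intro G hG
    constructor
    · refine Module.End.isSemisimple_of_squarefree_aeval_eq_zero hS.minpoly_squarefree ?_
      have : Polynomial.aeval (G S) (minpoly F S) = G (Polynomial.aeval S (minpoly F S)) := by
        rw [Polynomial.aeval_eq_sum_range, Polynomial.aeval_eq_sum_range, map_sum]
        simp [hG]
      rw [this, minpoly.aeval, map_zero]
    · obtain ⟨k, hk⟩ := hN
      exact ⟨k, by rw [← hG, hk, map_zero]⟩
  have cNS : ∀ a, N (S a) = S (N a) := fun a => LinearMap.congr_fun hc a
  have sS : (C S - A S - B S).IsSemisimple := by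
    refine Module.End.IsSemisimple.sub_of_commute ?_
      (Module.End.IsSemisimple.sub_of_commute ?_ (key C pC).1 (key A pA).1) (key B pB).1
    · ext m a b; simp [hA, hB, hC]
    · ext m a b; simp [hA, hC]
  have sN : IsNilpotent (C N - A N - B N) := by
    refine Commute.isNilpotent_sub (R := Module.End F (L →ₗ[F] L →ₗ[F] L)) ?_
      (Commute.isNilpotent_sub (R := Module.End F (L →ₗ[F] L →ₗ[F] L)) ?_ (key C pC).2 (key A pA).2) (key B pB).2
    · ext m a b; simp [hA, hB, hC]
    · ext m a b; simp [hA, hC]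
  have cc : Commute (C N - A N - B N) (C S - A S - B S) := by
    ext m a b; simp only [Module.End.mul_apply, LinearMap.sub_apply, hA, hB, hC, cNS, map_sub]; abel
  generalize hs : C S - A S - B S = s at *
  generalize hn : C N - A N - B N = n at *
  have hzero := aux_ker n s sN sS cc
  have h0 := hzero (LieModule.toEnd F L L : L →ₗ[F] L →ₗ[F] L) (by
    rw [← hs, ← hn]
    ext a b
    have := hD a b
    rw [hDNS] at this
    simp only [LinearMap.add_apply, lie_add, add_lie] at this
    simp [hA, hB, hC]
    rw [← sub_eq_zero] at this
    rw [← this]; abel)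
  have h1 := LinearMap.congr_fun₂ h0 x y
  rw [← hs] at h1
  simp [hA, hB, hC] at h1
  rw [sub_sub, sub_eq_zero] at h1
  exact h1
open Polynomial in
theorem aux_g {V : Type*} [AddCommGroup V] [Module ℚ V] (R : Finset V) (a₀ : V) (h : a₀ ≠ 0) :
    ∃ g : V →ₗ[ℚ] ℚ, (∀ a ∈ R, ∃ m : ℤ, g a = m) ∧ 0 < g a₀ := by
  obtain ⟨f, hf⟩ : ∃ f : V →ₗ[ℚ] ℚ, 0 < f a₀ := by
    obtain ⟨f, hf⟩ : ∃ f : V →ₗ[ℚ] ℚ, f a₀ ≠ 0 := by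
      by_contra! hc
      exact h ((Module.forall_dual_apply_eq_zero_iff ℚ a₀).1 hc)
    rcases lt_or_gt_of_ne hf with h1 | h1
    · exact ⟨-f, by simpa using h1⟩
    · exact ⟨f, h1⟩
  set N : ℕ := ∏ a ∈ R, (f a).den with hN
  have hNpos : 0 < N := Finset.prod_pos fun a _ => (f a).den_pos
  refine ⟨(N : ℚ) • f, ?_, ?_⟩
  · intro a ha
    obtain ⟨c, hc⟩ : (f a).den ∣ N := Finset.dvd_prod_of_mem _ ha
    refine ⟨(f a).num * c, ?_⟩
    rw [LinearMap.smul_apply, hc, smul_eq_mul]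
    push_cast
    have := Rat.mul_den_eq_num (f a)
    rw [← this]; ring
  · rw [LinearMap.smul_apply, smul_eq_mul]
    exact mul_pos (by exact_mod_cast hNpos) hf

open Polynomial in
theorem aux_k {F K : Type*} [Field F] [CharZero F] [Field K] [Algebra F K] [FiniteDimensional F K]
    [IsGalois F K] (m : (K ≃ₐ[F] K) → ℤ) (hm : 0 < m 1) :
    ∃ k : K, k ≠ 0 ∧ ∏ σ : K ≃ₐ[F] K, (σ k) ^ (m σ) ≠ 1 := by
  classical
  have : CharZero K := charZero_of_injective_algebraMap (algebraMap F K).injective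
  obtain ⟨θ, hθ⟩ := Field.exists_primitive_element F K
  by_contra! hc
  let a : K[X] := ∏ σ : K ≃ₐ[F] K, (X + C (σ θ)) ^ (m σ).toNat
  let b : K[X] := ∏ σ : K ≃ₐ[F] K, (X + C (σ θ)) ^ (-m σ).toNat
  have hab : a = b := by
    refine Polynomial.eq_of_infinite_eval_eq a b ?_
    have hinf : (Set.range (fun n : ℕ => (n : K)) \ {-θ}).Infinite :=
      (Set.infinite_range_of_injective Nat.cast_injective).diff (Set.finite_singleton _)
    refine hinf.mono ?_
    rintro _ ⟨⟨n, rfl⟩, hn⟩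
    have hk : (n : K) + θ ≠ 0 := fun h0 => hn (eq_neg_of_add_eq_zero_left h0)
    have := hc _ hk
    simp only [a, b, Set.mem_setOf_eq, eval_prod, eval_pow, eval_add, eval_X, eval_C]
    have hs : ∀ σ : K ≃ₐ[F] K, σ ((n : K) + θ) = n + σ θ := fun σ => by simp
    have hne : ∀ σ : K ≃ₐ[F] K, (n : K) + σ θ ≠ 0 := fun σ => by
      rw [← hs]; exact (map_ne_zero σ).2 hk
    simp only [hs] at this
    have h2 : ∀ σ : K ≃ₐ[F] K, ((n : K) + σ θ) ^ (m σ).toNat =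
        ((n : K) + σ θ) ^ (m σ) * ((n : K) + σ θ) ^ (-m σ).toNat := fun σ => by
      rw [← zpow_natCast, ← zpow_natCast, ← zpow_add₀ (hne σ)]
      congr 1
      omega
    rw [Finset.prod_congr rfl fun σ _ => h2 σ, Finset.prod_mul_distrib, this, one_mul]
  have ha : a.eval (-θ) = 0 := by
    simp only [a, eval_prod, eval_pow, eval_add, eval_X, eval_C]
    refine Finset.prod_eq_zero (Finset.mem_univ 1) ?_
    simp; omega
  have hb : b.eval (-θ) ≠ 0 := by
    simp only [b, eval_prod, eval_pow, eval_add, eval_X, eval_C]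
    refine Finset.prod_ne_zero_iff.2 fun σ _ => ?_
    by_cases h1 : σ = 1
    · subst h1
      rw [Int.toNat_of_nonpos (by omega), pow_zero]; exact one_ne_zero
    · refine pow_ne_zero _ fun h0 => h1 ?_
      have h3 : σ θ = θ := by linear_combination h0
      have : (⊤ : IntermediateField F K) ≤ IntermediateField.fixedField (Subgroup.zpowers σ) := by
        rw [← hθ, IntermediateField.adjoin_simple_le_iff, IntermediateField.mem_fixedField_iff]
        intro f hf
        have : Subgroup.zpowers σ ≤ MulAction.stabilizer (K ≃ₐ[F] K) θ := by
          rw [Subgroup.zpowers_le]; exact h3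
        exact this hf
      ext x
      exact (IntermediateField.mem_fixedField_iff _ _).1 (this (IntermediateField.mem_top (x := x))) σ
        (Subgroup.mem_zpowers σ)
  exact hb (hab ▸ ha)

open Polynomial in
theorem aux_arith {F K : Type*} [Field F] [CharZero F] [Field K] [Algebra F K]
    [FiniteDimensional F K] [IsGalois F K] (R : Finset K)
    (hR : ∀ σ : K ≃ₐ[F] K, ∀ a ∈ R, σ a ∈ R) (a₀ : K) (ha₀ : a₀ ∈ R) (hne : a₀ ≠ 0) :
    ∃ P : F[X], aeval (0 : K) P = 1 ∧ (∀ a ∈ R, aeval a P ≠ 0) ∧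
      (∀ a ∈ R, ∀ b ∈ R, aeval (a + b) P = aeval a P * aeval b P) ∧ aeval a₀ P ≠ 1 := by
  classical
  have : CharZero K := charZero_of_injective_algebraMap (algebraMap F K).injective
  obtain ⟨g, hg, hg0⟩ := aux_g R a₀ hne
  obtain ⟨k, hk0, hk⟩ := aux_k (F := F) (K := K) (fun σ => ⌊g (σ⁻¹ a₀)⌋) (by
    obtain ⟨m, hm⟩ := hg a₀ ha₀
    simp only [inv_one, AlgEquiv.one_apply]
    rw [hm] at hg0 ⊢
    simpa using hg0)
  let h : K → K := fun x => ∏ σ : K ≃ₐ[F] K, (σ k) ^ ⌊g (σ⁻¹ x)⌋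
  have hσk : ∀ σ : K ≃ₐ[F] K, σ k ≠ 0 := fun σ => (map_ne_zero σ).2 hk0
  have h_zero : h 0 = 1 := by simp [h]
  have h_ne : ∀ x, h x ≠ 0 := fun x => Finset.prod_ne_zero_iff.2 fun σ _ => zpow_ne_zero _ (hσk σ)
  have h_add : ∀ a ∈ R, ∀ b ∈ R, h (a + b) = h a * h b := by
    intro a ha b hb
    simp only [h]
    rw [← Finset.prod_mul_distrib]
    refine Finset.prod_congr rfl fun σ _ => ?_
    rw [← zpow_add₀ (hσk σ)]
    obtain ⟨m, hm⟩ := hg _ (hR σ⁻¹ a ha)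
    obtain ⟨n, hn⟩ := hg _ (hR σ⁻¹ b hb)
    rw [map_add, map_add, hm, hn, ← Int.cast_add]
    simp only [Int.floor_intCast]
  have h_eq : ∀ (τ : K ≃ₐ[F] K) x, h (τ x) = τ (h x) := by
    intro τ x
    simp only [h, map_prod, map_zpow₀]
    refine (Fintype.prod_equiv (Equiv.mulLeft τ) _ _ fun σ => ?_).symm
    simp [mul_inv_rev, AlgEquiv.mul_apply]
  let T : Finset K := insert 0 (R ∪ (R ×ˢ R).image fun p => p.1 + p.2)
  have hT : ∀ σ : K ≃ₐ[F] K, ∀ a ∈ T, σ a ∈ T := by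
    intro σ a ha
    simp only [T, Finset.mem_insert, Finset.mem_union, Finset.mem_image, Finset.mem_product,
      Prod.exists] at ha ⊢
    rcases ha with rfl | ha | ⟨x, y, ⟨hx, hy⟩, rfl⟩
    · left; simp
    · right; left; exact hR σ a ha
    · right; right; exact ⟨σ x, σ y, ⟨hR σ x hx, hR σ y hy⟩, by simp⟩
  let P : K[X] := Lagrange.interpolate T id h
  have hinj : Set.InjOn (id : K → K) T := Function.injective_id.injOn
  have hP : ∀ x ∈ T, P.eval x = h x := fun x hx => Lagrange.eval_interpolate_at_node h hinj hx
  have hPσ : ∀ σ : K ≃ₐ[F] K, P.map (σ : K →+* K) = P := by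
    intro σ
    refine Lagrange.eq_interpolate_of_eval_eq h hinj ?_ ?_
    · exact (degree_map_le).trans_lt (Lagrange.degree_interpolate_lt h hinj)
    · intro x hx
      have hy : σ⁻¹ x ∈ T := hT _ _ hx
      have hxy : x = σ (σ⁻¹ x) := (σ.apply_symm_apply x).symm
      change eval x (P.map (σ : K →+* K)) = h x
      conv_lhs => rw [hxy]
      conv_rhs => rw [hxy]
      have := Polynomial.eval_map_apply (f := (σ : K →+* K)) (p := P) (σ⁻¹ x)
      rw [h_eq, ← hP _ hy]
      exact this
  have hlift : P ∈ lifts (algebraMap F K) := by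
    rw [lifts_iff_coeff_lifts]
    intro n
    rw [IsGalois.mem_range_algebraMap_iff_fixed]
    intro σ
    have := congrArg (fun q => coeff q n) (hPσ σ)
    simpa using this
  obtain ⟨Q, hQ⟩ := (mem_lifts _).1 hlift
  have hQe : ∀ x ∈ T, aeval x Q = h x := fun x hx => by
    rw [← hP x hx, ← hQ, eval_map_algebraMap]
  have mR : ∀ x ∈ R, x ∈ T := fun x hx => by simp [T, hx]
  refine ⟨Q, ?_, ?_, ?_, ?_⟩
  · rw [hQe _ (by simp [T]), h_zero]
  · intro a ha
    rw [hQe _ (mR a ha)]; exact h_ne a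
  · intro a ha b hb
    rw [hQe _ (mR a ha), hQe _ (mR b hb), hQe, h_add a ha b hb]
    simp only [T, Finset.mem_insert, Finset.mem_union, Finset.mem_image, Finset.mem_product,
      Prod.exists]
    right; right; exact ⟨a, b, ⟨ha, hb⟩, rfl⟩
  · rw [hQe _ (mR _ ha₀)]
    exact hk

open Polynomial in
theorem aux_eig {K V : Type*} [Field K] [AddCommGroup V] [Module K V] (f : Module.End K V)
    (Q : Submodule K V) (R : Finset K) (hQ : ∀ a ∈ R, ∀ v, f v = a • v → v ∈ Q) :
    LinearMap.ker (aeval f (∏ a ∈ R, (X - C a))) ≤ Q := by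
  classical
  induction R using Finset.induction_on with
  | empty =>
    intro x hx
    have : x = 0 := by simpa using hx
    rw [this]; exact Q.zero_mem
  | insert a R ha ih =>
    rw [Finset.prod_insert ha]
    have hcop : IsCoprime (X - C a) (∏ b ∈ R, (X - C b)) := by
      refine IsCoprime.prod_right fun b hb => ?_
      exact isCoprime_X_sub_C_of_isUnit_sub
        (isUnit_iff_ne_zero.2 (sub_ne_zero.2 fun h => ha (h ▸ hb)))
    rw [← sup_ker_aeval_eq_ker_aeval_mul_of_coprime f hcop]
    refine sup_le ?_ (ih fun b hb => hQ b (Finset.mem_insert_of_mem hb))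
    intro v hv
    refine hQ a (Finset.mem_insert_self _ _) v ?_
    rw [LinearMap.mem_ker] at hv
    simpa [sub_eq_zero] using hv

open Polynomial TensorProduct in
theorem aux_hom {F K L : Type*} [Field F] [Field K] [Algebra F K] [LieRing L] [LieAlgebra F L]
    (S : Module.End F L) (hS : ∀ x y, S ⁅x, y⁆ = ⁅S x, y⁆ + ⁅x, S y⁆)
    (μ : F[X]) (hμ : aeval S μ = 0) (R : Finset K)
    (hR : μ.map (algebraMap F K) = ∏ a ∈ R, (X - C a)) (P : F[X])
    (hP : ∀ a ∈ R, ∀ b ∈ R, aeval (a + b) P = aeval a P * aeval b P) (x y : L) :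
    aeval S P ⁅x, y⁆ = ⁅aeval S P x, aeval S P y⁆ := by
  let f : Module.End K (K ⊗[F] L) := S.baseChange K
  have hf : ∀ Q : F[X], (aeval S Q).baseChange K = aeval f (Q.map (algebraMap F K)) := by
    intro Q
    rw [aeval_map_algebraMap]
    exact (aeval_algHom_apply (Module.End.baseChangeHom F K L) S Q).symm
  have hf0 : aeval f (∏ a ∈ R, (X - C a)) = 0 := by
    rw [← hR, ← hf, hμ]; exact LinearMap.baseChange_zero
  have hder : ∀ u v : K ⊗[F] L, f ⁅u, v⁆ = ⁅f u, v⁆ + ⁅u, f v⁆ := by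
    intro u v
    induction u with
    | zero => simp
    | add u₁ u₂ h1 h2 => simp only [add_lie, map_add, h1, h2]; abel
    | tmul k a =>
      induction v with
      | zero => simp
      | add u₁ u₂ h1 h2 => simp only [lie_add, map_add, h1, h2]; abel
      | tmul l b =>
        simp [f, LieAlgebra.ExtendScalars.bracket_tmul, hS, tmul_add]
  have hev : ∀ (v : K ⊗[F] L) (a : K), f v = a • v →
      aeval f (P.map (algebraMap F K)) v = aeval a P • v := by
    intro v a hv
    rw [Module.End.aeval_apply_of_mem_apply_eq_smul hv, eval_map_algebraMap]
  set p := aeval f (P.map (algebraMap F K)) with hp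
  have main : ∀ u v : K ⊗[F] L, p ⁅u, v⁆ = ⁅p u, p v⁆ := by
    intro u v
    let Q1 : Submodule K (K ⊗[F] L) :=
      { carrier := {u | ∀ v, p ⁅u, v⁆ = ⁅p u, p v⁆}
        zero_mem' := fun v => by simp
        add_mem' := fun {a b} ha hb v => by
          rw [add_lie, map_add, ha v, hb v, map_add, add_lie]
        smul_mem' := fun c a ha v => by
          rw [smul_lie, map_smul, ha v, map_smul, smul_lie] }
    have : u ∈ Q1 := by
      refine aux_eig f Q1 R ?_ (by rw [hf0]; simp)
      intro a ha u hu v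
      let Q2 : Submodule K (K ⊗[F] L) :=
        { carrier := {v | p ⁅u, v⁆ = ⁅p u, p v⁆}
          zero_mem' := by simp
          add_mem' := fun {a b} ha hb => by
            have ha : p ⁅u, a⁆ = ⁅p u, p a⁆ := ha
            have hb : p ⁅u, b⁆ = ⁅p u, p b⁆ := hb
            change p ⁅u, a + b⁆ = ⁅p u, p (a + b)⁆
            rw [lie_add, map_add, ha, hb, map_add, lie_add]
          smul_mem' := fun c a ha => by
            have ha : p ⁅u, a⁆ = ⁅p u, p a⁆ := ha
            change p ⁅u, c • a⁆ = ⁅p u, p (c • a)⁆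
            rw [lie_smul, map_smul, ha, map_smul, lie_smul] }
      have : v ∈ Q2 := by
        refine aux_eig f Q2 R ?_ (by rw [hf0]; simp)
        intro b hb v hv
        change p ⁅u, v⁆ = ⁅p u, p v⁆
        rw [hev u a hu, hev v b hv, hev _ (a + b), hP a ha b hb, smul_lie, lie_smul, mul_smul]
        rw [hder, hu, hv, smul_lie, lie_smul, add_smul]
      exact this
    exact this v
  have h1 := main (1 ⊗ₜ x) (1 ⊗ₜ y)
  rw [hp, ← hf] at h1
  simp only [LieAlgebra.ExtendScalars.bracket_tmul, LinearMap.baseChange_tmul, mul_one] at h1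
  exact (Module.Flat.tensorProduct_mk_injective (R := F) (M := L) K) h1

open Polynomial in
theorem aux_factor {F K : Type*} [Field F] [CharZero F] [Field K] [Algebra F K] [DecidableEq K]
    (ν : F[X]) (hm : ν.Monic) (hsq : Squarefree ν) (hs : (ν.map (algebraMap F K)).Splits) :
    ν.map (algebraMap F K) = ∏ a ∈ (ν.aroots K).toFinset, (X - C a) := by
  have hsep : (ν.map (algebraMap F K)).Separable := (PerfectField.separable_iff_squarefree.2 hsq).map
  have hn : (ν.aroots K).Nodup := nodup_roots hsep
  conv_lhs => rw [hs.eq_prod_roots_of_monic (hm.map _)]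
  rw [Finset.prod, Multiset.toFinset_val, hn.dedup]

theorem aux_inv {F V : Type*} [Field F] [AddCommGroup V] [Module F V] (f : Module.End F V)
    (Q : Submodule F V) (h : ∀ v ∈ Q, f v ∈ Q) (p : Polynomial F) (v : V) (hv : v ∈ Q) :
    Polynomial.aeval f p v ∈ Q := by
  rw [Polynomial.aeval_eq_sum_range, LinearMap.sum_apply]
  refine Q.sum_mem fun i hi => Q.smul_mem _ ?_
  clear hi
  induction i with
  | zero => simpa using hv
  | succ i ih => rw [pow_succ', Module.End.mul_apply]; exact h _ ih

open Polynomial in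
theorem aux_divX {F V : Type*} [Field F] [AddCommGroup V] [Module F V] (f : Module.End F V)
    (p : F[X]) (v : V) : aeval f p v = aeval f p.divX (f v) + p.coeff 0 • v := by
  conv_lhs => rw [← divX_mul_X_add p]
  simp

theorem aux_der_lcs {F L : Type*} [Field F] [LieRing L] [LieAlgebra F L] (S : Module.End F L)
    (hS : ∀ x y, S ⁅x, y⁆ = ⁅S x, y⁆ + ⁅x, S y⁆) (w : L)
    (hw : w ∈ LieModule.lowerCentralSeries F L L 1) :
    S w ∈ LieModule.lowerCentralSeries F L L 1 :=
  aux_lcs_induct ((LieModule.lowerCentralSeries F L L 1).toSubmodule.comap S) (fun x y => by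
    rw [Submodule.mem_comap, hS]
    exact add_mem (aux_lie_mem _ _) (aux_lie_mem _ _)) w hw

theorem aux_der_center {F L : Type*} [Field F] [LieRing L] [LieAlgebra F L] (S : Module.End F L)
    (hS : ∀ x y, S ⁅x, y⁆ = ⁅S x, y⁆ + ⁅x, S y⁆) (w : L)
    (hw : w ∈ LieAlgebra.center F L) : S w ∈ LieAlgebra.center F L := by
  have hw' := (LieModule.mem_maxTrivSubmodule F L L w).1 hw
  refine (LieModule.mem_maxTrivSubmodule F L L _).2 fun x => ?_
  have := hS x w
  rw [hw', hw', map_zero, zero_add] at this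
  exact this.symm

open Polynomial in
theorem aux_torus {F L : Type*} [Field F] [CharZero F] [LieRing L] [LieAlgebra F L]
    [Module.Finite F L] (S : Module.End F L) (hS : ∀ x y, S ⁅x, y⁆ = ⁅S x, y⁆ + ⁅x, S y⁆)
    (hss : S.IsSemisimple)
    (hZ : ∀ w ∈ LieModule.lowerCentralSeries F L L 1, S w ∈ LieAlgebra.center F L)
    (hne : ∃ w ∈ LieModule.lowerCentralSeries F L L 1, S w ≠ 0) :
    ∃ φ : L ≃ₗ⁅F⁆ L,
      (∀ w ∈ LieModule.lowerCentralSeries F L L 1, φ w - w ∈ LieAlgebra.center F L) ∧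
      (∃ w ∈ LieModule.lowerCentralSeries F L L 1, φ w ≠ w) := by
  classical
  set W : Submodule F L := (LieModule.lowerCentralSeries F L L 1).toSubmodule with hW
  have inv : ∀ w ∈ W, S w ∈ W := fun w hw => aux_der_lcs S hS w hw
  let S2 : Module.End F W := S.restrict inv
  have hss2 : S2.IsSemisimple := Module.End.IsSemisimple.restrict inv hss
  set μ := minpoly F S with hμ
  set ν := minpoly F S2 with hν
  let K := μ.SplittingField
  have hmon : μ.Monic := minpoly.monic (Algebra.IsIntegral.isIntegral S)
  have hmon2 : ν.Monic := minpoly.monic (Algebra.IsIntegral.isIntegral S2)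
  have : IsGalois F K :=
    IsGalois.of_separable_splitting_field (p := μ)
      (PerfectField.separable_iff_squarefree.2 hss.minpoly_squarefree)
  have hres : ∀ (p : F[X]) (w : W), ((aeval S2 p w : W) : L) = aeval S p w := by
    intro p w
    rw [aeval_eq_sum_range, aeval_eq_sum_range, LinearMap.sum_apply, LinearMap.sum_apply,
      AddSubmonoidClass.coe_finset_sum]
    refine Finset.sum_congr rfl fun i hi => ?_
    clear hi
    have : ((S2 ^ i) w : L) = (S ^ i) (w : L) := by
      induction i with
      | zero => rfl
      | succ i ih =>
        rw [pow_succ', pow_succ', Module.End.mul_apply, Module.End.mul_apply, ← ih]; rfl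
    simp [this]
  have hdvd : ν ∣ μ := by
    refine minpoly.dvd F S2 ?_
    ext w
    rw [hres, minpoly.aeval]; rfl
  have hsp : (μ.map (algebraMap F K)).Splits := SplittingField.splits μ
  have hmap0 : μ.map (algebraMap F K) ≠ 0 := (hmon.map _).ne_zero
  have hsp2 : (ν.map (algebraMap F K)).Splits :=
    hsp.of_dvd hmap0 (Polynomial.map_dvd _ hdvd)
  have fac := aux_factor (K := K) μ hmon hss.minpoly_squarefree hsp
  have fac2 := aux_factor (K := K) ν hmon2 hss2.minpoly_squarefree hsp2
  set R := (μ.aroots K).toFinset with hRdef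
  have memR : ∀ a, a ∈ R ↔ aeval a μ = 0 := fun a => by
    rw [hRdef, Multiset.mem_toFinset, mem_aroots]
    exact ⟨fun h => h.2, fun h => ⟨hmon.ne_zero, h⟩⟩
  have hRσ : ∀ σ : K ≃ₐ[F] K, ∀ a ∈ R, σ a ∈ R := by
    intro σ a ha
    rw [memR] at ha ⊢
    have := aeval_algHom_apply (σ : K →ₐ[F] K) a μ
    rw [ha, map_zero] at this
    exact this
  obtain ⟨a₀, ha₀, ha₀ne⟩ : ∃ a₀ : K, aeval a₀ ν = 0 ∧ a₀ ≠ 0 := by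
    by_contra! hc
    have hsub : (ν.aroots K).toFinset ⊆ {0} := by
      intro a ha
      rw [Multiset.mem_toFinset, mem_aroots] at ha
      rw [Finset.mem_singleton]
      exact hc a ha.2
    have h1 : ν.map (algebraMap F K) ∣ X := by
      rw [fac2]
      have := Finset.prod_dvd_prod_of_subset _ _ (fun a : K => (X - C a : K[X])) hsub
      simpa using this
    have h2 : ν ∣ X := by
      rw [← Polynomial.map_dvd_map' (algebraMap F K), map_X]; exact h1
    obtain ⟨w, hw, hw0⟩ := hne
    obtain ⟨c, hc⟩ := h2
    have h3 : aeval S2 (X : F[X]) = 0 := by rw [hc, map_mul, minpoly.aeval, zero_mul]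
    rw [aeval_X] at h3
    exact hw0 (congrArg Subtype.val (LinearMap.congr_fun h3 ⟨w, hw⟩))
  have ha₀R : a₀ ∈ R := by
    rw [memR]
    exact aeval_eq_zero_of_dvd_aeval_eq_zero hdvd ha₀
  obtain ⟨P, hP0, hPne, hPadd, hPa⟩ := aux_arith (F := F) R hRσ a₀ ha₀R ha₀ne
  have hcoeff : P.coeff 0 = 1 := by
    rw [← map_zero (algebraMap F K), aeval_algebraMap_apply] at hP0
    have := (algebraMap F K).injective (hP0.trans (map_one _).symm)
    rwa [coeff_zero_eq_aeval_zero]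
  have hcop : IsCoprime μ P := by
    rw [← isCoprime_map (algebraMap F K), fac]
    refine IsCoprime.prod_left fun a ha => ?_
    rw [(irreducible_X_sub_C a).coprime_iff_not_dvd, dvd_iff_isRoot, IsRoot, eval_map_algebraMap]
    exact hPne a ha
  have hhom := aux_hom S hS μ (minpoly.aeval F S) R fac P hPadd
  have hinj : Function.Injective (aeval S P) := by
    obtain ⟨u, v, huv⟩ := hcop
    refine Function.LeftInverse.injective (g := aeval S v) fun x => ?_
    have := congrArg (fun q => aeval S q x) huv
    simpa [minpoly.aeval, hμ] using this
  have hsurj : Function.Surjective (aeval S P) := LinearMap.injective_iff_surjective.1 hinj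
  let φ₀ : L →ₗ⁅F⁆ L := { aeval S P with map_lie' := fun {x y} => hhom x y }
  let φ : L ≃ₗ⁅F⁆ L := LieEquiv.ofBijective φ₀ ⟨hinj, hsurj⟩
  have hφ : ∀ x, φ x = aeval S P x := fun x => rfl
  refine ⟨φ, ?_, ?_⟩
  · intro w hw
    rw [hφ, aux_divX, hcoeff, one_smul, add_sub_cancel_right]
    exact aux_inv S (LieAlgebra.center F L).toSubmodule (aux_der_center S hS) _ _ (hZ w hw)
  · by_contra! hc
    have h1 : ν ∣ P - 1 := by
      refine minpoly.dvd F S2 ?_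
      ext w
      rw [map_sub, map_one, LinearMap.sub_apply, AddSubgroupClass.coe_sub, hres, ← hφ, hc w w.2]
      simp
    obtain ⟨c, hc'⟩ := h1
    have : aeval a₀ (P - 1) = 0 := by rw [hc', map_mul, ha₀, zero_mul]
    rw [map_sub, map_one, sub_eq_zero] at this
    exact hPa this

theorem aux_nilp {F L : Type*} [Field F] [CharZero F] [LieRing L] [LieAlgebra F L]
    (S : Module.End F L) (hS : ∀ x y, S ⁅x, y⁆ = ⁅S x, y⁆ + ⁅x, S y⁆)
    (hss : IsNilpotent S)
    (hZ : ∀ w ∈ LieModule.lowerCentralSeries F L L 1, S w ∈ LieAlgebra.center F L)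
    (hne : ∃ w ∈ LieModule.lowerCentralSeries F L L 1, S w ≠ 0) :
    ∃ φ : L ≃ₗ⁅F⁆ L,
      (∀ w ∈ LieModule.lowerCentralSeries F L L 1, φ w - w ∈ LieAlgebra.center F L) ∧
      (∃ w ∈ LieModule.lowerCentralSeries F L L 1, φ w ≠ w) := by
  let mQ : Module ℚ L := Module.compHom L (algebraMap ℚ F)
  have tower : IsScalarTower ℚ F L := ⟨fun q f x => by
    change (q • f) • x = algebraMap ℚ F q • (f • x)
    rw [smul_smul, Algebra.smul_def]⟩
  let lQ : LieAlgebra ℚ L := { mQ with lie_smul := fun q x y => lie_smul (algebraMap ℚ F q) x y }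
  have hleib : ∀ a b : L, S ⁅a, b⁆ = ⁅a, S b⁆ - ⁅b, S a⁆ := fun a b => by
    rw [hS a b, ← lie_skew b (S a), add_comm, sub_eq_add_neg, neg_neg]
  let N : LieDerivation F L L := { S with leibniz' := hleib }
  have hN : IsNilpotent N.toLinearMap := hss
  obtain ⟨k, hk⟩ := hss
  have hk2 : N.toLinearMap ^ (k + 2) = 0 := by
    change S ^ (k + 2) = 0
    rw [pow_add, hk, zero_mul]
  have hφ : ∀ x, LieDerivation.exp N hN x =
      ∑ i ∈ Finset.range (k + 2), ((i.factorial : ℚ)⁻¹) • (S ^ i) x := by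
    intro x
    rw [LieDerivation.exp_map_apply, IsNilpotent.exp_eq_sum hk2, LinearMap.sum_apply]
    rfl
  refine ⟨LieDerivation.exp N hN, ?_, ?_⟩
  · intro w hw
    rw [hφ, Finset.sum_range_succ']
    simp only [Nat.factorial_zero, Nat.cast_one, inv_one, pow_zero, one_smul, Module.End.one_apply,
      add_sub_cancel_right]
    refine sum_mem fun i _ => ?_
    refine (LieAlgebra.center F L).toSubmodule.smul_mem (algebraMap ℚ F _) ?_
    rw [pow_succ, Module.End.mul_apply]
    have := aux_inv S (LieAlgebra.center F L).toSubmodule (aux_der_center S hS)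
      (Polynomial.X ^ i) _ (hZ w hw)
    simpa using this
  · obtain ⟨v, hv, hv1, hv2⟩ : ∃ v ∈ LieModule.lowerCentralSeries F L L 1,
        S v ≠ 0 ∧ S (S v) = 0 := by
      by_contra! hc
      obtain ⟨w, hw, hw0⟩ := hne
      have : ∀ j : ℕ, (S ^ j) w ∈ LieModule.lowerCentralSeries F L L 1 ∧ S ((S ^ j) w) ≠ 0 := by
        intro j
        induction j with
        | zero => exact ⟨hw, hw0⟩
        | succ j ih =>
          rw [pow_succ', Module.End.mul_apply]
          exact ⟨aux_der_lcs S hS _ ih.1, hc _ ih.1 ih.2⟩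
      apply (this k).2
      rw [hk]; simp
    refine ⟨v, hv, ?_⟩
    rw [hφ, Finset.sum_range_succ', Finset.sum_range_succ', Finset.sum_eq_zero]
    · simpa using hv1
    · intro i _
      rw [add_assoc, pow_add, Module.End.mul_apply]
      have : (S ^ (1 + 1)) v = 0 := by rw [pow_succ, pow_one, Module.End.mul_apply, hv2]
      rw [this, map_zero, smul_zero]

/-- If a finite-dimensional nilpotent Lie algebra `n` of nilindex `p ≥ 4` over a
field of characteristic zero admits a derivation `D` with `D(n²) ⊆ Z(n)` not
vanishing identically on `n²`, then `n` admits a local automorphism which is not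
an automorphism. -/
theorem stmt_15 (F : Type*) [Field F] [CharZero F]
    (L : Type*) [LieRing L] [LieAlgebra F L] [Module.Finite F L]
    (p : ℕ) (hp : 4 ≤ p)
    (hnil : LieModule.lowerCentralSeries F L L (p - 1) = ⊥)
    (hnil' : LieModule.lowerCentralSeries F L L (p - 2) ≠ ⊥)
    (D : LieDerivation F L L)
    (hD : ∀ x ∈ LieModule.lowerCentralSeries F L L 1, D x ∈ LieAlgebra.center F L)
    (hD' : ∃ x ∈ LieModule.lowerCentralSeries F L L 1, D x ≠ 0) :
    ∃ T : L →ₗ[F] L,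
      (∀ x : L, ∃ φ : L ≃ₗ⁅F⁆ L, T x = φ x) ∧
      ¬ (Function.Bijective T ∧ ∀ x y : L, T ⁅x, y⁆ = ⁅T x, T y⁆) := by
  have hDer : ∀ x y, D.toLinearMap ⁅x, y⁆ = ⁅D.toLinearMap x, y⁆ + ⁅x, D.toLinearMap y⁆ :=
    fun x y => by
      have := D.apply_lie_eq_add x y
      rw [add_comm] at this
      exact this
  let E : Module.End F L := D.toLinearMap
  have hE : ∀ x, E x = D x := fun x => rfl
  obtain ⟨N, hN, S, hS, hNn, hSs, hNS⟩ := Module.End.exists_isNilpotent_isSemisimple (f := E)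
  rw [Algebra.adjoin_singleton_eq_range_aeval] at hN hS
  obtain ⟨r, rfl⟩ := hN
  obtain ⟨q, rfl⟩ := hS
  change IsNilpotent (Polynomial.aeval E r) at hNn
  change (Polynomial.aeval E q).IsSemisimple at hSs
  change E = Polynomial.aeval E r + Polynomial.aeval E q at hNS
  have hcomm : Commute (Polynomial.aeval E r) (Polynomial.aeval E q) := by
    change _ * _ = _ * _
    rw [← map_mul, ← map_mul, mul_comm]
  have hSd := aux_jordan E _ _ hDer hNn hSs hcomm hNS
  have hZinv : ∀ p : Polynomial F, ∀ z ∈ LieAlgebra.center F L,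
      Polynomial.aeval E p z ∈ LieAlgebra.center F L := fun p z hz =>
    aux_inv E (LieAlgebra.center F L).toSubmodule (aux_der_center E hDer) p z hz
  have hS0 : ∀ w ∈ LieModule.lowerCentralSeries F L L 1,
      Polynomial.aeval E q w - q.coeff 0 • w ∈ LieAlgebra.center F L := fun w hw => by
    rw [aux_divX, add_sub_cancel_right]
    exact hZinv _ _ (hD w hw)
  have hrw : ∀ w, E w = Polynomial.aeval E r w + Polynomial.aeval E q w := fun w =>
    LinearMap.congr_fun hNS w
  have hN0 : ∀ w ∈ LieModule.lowerCentralSeries F L L 1,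
      Polynomial.aeval E r w + q.coeff 0 • w ∈ LieAlgebra.center F L := fun w hw => by
    have h1 := sub_mem (hD w hw) (hS0 w hw)
    rw [← hE, hrw] at h1
    convert h1 using 1
    abel
  have hSZ : ∀ w ∈ LieModule.lowerCentralSeries F L L 1,
      Polynomial.aeval E q w ∈ LieAlgebra.center F L := fun w hw => by
    obtain ⟨k, hk⟩ := hNn
    have hpow : ∀ j : ℕ, (Polynomial.aeval E r ^ j) w - (-q.coeff 0) ^ j • w ∈
        LieAlgebra.center F L := by
      intro j
      induction j with
      | zero => simp
      | succ j ih =>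
        have h1 := hZinv r _ ih
        have h2 := (LieAlgebra.center F L).smul_mem ((-q.coeff 0) ^ j) (hN0 w hw)
        have h3 := add_mem h1 h2
        convert h3 using 1
        rw [pow_succ', Module.End.mul_apply, map_sub, map_smul, smul_add, smul_smul, pow_succ,
          mul_neg, neg_smul]
        abel
    have h1 := hpow k
    rw [hk, LinearMap.zero_apply, zero_sub, neg_mem_iff] at h1
    by_cases h0 : q.coeff 0 = 0
    · have := hS0 w hw
      rwa [h0, zero_smul, sub_zero] at this
    · have h2 := (LieAlgebra.center F L).smul_mem (((-q.coeff 0) ^ k)⁻¹) h1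
      rw [smul_smul, inv_mul_cancel₀ (pow_ne_zero _ (neg_ne_zero.2 h0)), one_smul] at h2
      exact hZinv q w h2
  obtain ⟨φ, h1, h2⟩ : ∃ φ : L ≃ₗ⁅F⁆ L,
      (∀ w ∈ LieModule.lowerCentralSeries F L L 1, φ w - w ∈ LieAlgebra.center F L) ∧
      (∃ w ∈ LieModule.lowerCentralSeries F L L 1, φ w ≠ w) := by
    by_cases hcase : ∃ w ∈ LieModule.lowerCentralSeries F L L 1, Polynomial.aeval E q w ≠ 0
    · exact aux_torus _ hSd hSs hSZ hcase
    · push Not at hcase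
      have hNE : ∀ w ∈ LieModule.lowerCentralSeries F L L 1,
          Polynomial.aeval E r w = D w := fun w hw => by
        rw [← hE, hrw, hcase w hw, add_zero]
      refine aux_nilp (Polynomial.aeval E r) ?_ hNn ?_ ?_
      · intro x y
        have h1 := hDer x y
        have h2 := hSd x y
        change E ⁅x, y⁆ = ⁅E x, y⁆ + ⁅x, E y⁆ at h1
        rw [hrw, hrw, hrw, h2, add_lie, lie_add, add_add_add_comm] at h1
        exact add_right_cancel h1
      · intro w hw
        rw [hNE w hw]; exact hD w hw
      · obtain ⟨w, hw, hw0⟩ := hD'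
        exact ⟨w, hw, by rwa [hNE w hw]⟩
  exact aux_reduction φ h1 h2
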